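/- Every strict 3-player game in which each player has exactly 2 strategies and which possesses a pure Nash equilibrium is weakly acyclic under best response. -/

import Mathlib

section Defs

variable {n : ℕ} {S : Fin n → Type*}

/-- A better-response transition: `s'` differs from `s` only in player `i`'s
strategy, which strictly improves `i`'s utility. -/
def IsBetter (u : ∀ i : Fin n, (∀ j, S j) → ℝ) (s s' : ∀ j, S j) : Prop :=
  ∃ i, s' = Function.update s i (s' i) ∧ s' i ≠ s i ∧ u i s < u i s'

/-- A best-response transition: additionally the new strategy maximizes
`i`'s utility against the others' strategies. -/
def IsBest (u : ∀ i : Fin n, (∀ j, S j) → ℝ) (s s' : ∀ j, S j) : Prop :=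
  ∃ i, s' = Function.update s i (s' i) ∧ s' i ≠ s i ∧ u i s < u i s' ∧
    ∀ t : S i, u i (Function.update s i t) ≤ u i s'

/-- Pure Nash equilibrium. -/
def IsNash (u : ∀ i : Fin n, (∀ j, S j) → ℝ) (s : ∀ j, S j) : Prop :=
  ∀ i, ∀ t : S i, u i (Function.update s i t) ≤ u i s

/-- Weak acyclicity (under better response). -/
def WeaklyAcyclic (u : ∀ i : Fin n, (∀ j, S j) → ℝ) : Prop :=
  ∀ s, ∃ e, Relation.ReflTransGen (IsBetter u) s e ∧ IsNash u e

/-- Weak acyclicity under best response. -/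
def WeaklyAcyclicBest (u : ∀ i : Fin n, (∀ j, S j) → ℝ) : Prop :=
  ∀ s, ∃ e, Relation.ReflTransGen (IsBest u) s e ∧ IsNash u e

/-- Membership of a profile in the subgame given by strategy sets `T`. -/
def InSub (T : ∀ i, Set (S i)) (s : ∀ j, S j) : Prop := ∀ i, s i ∈ T i

/-- Pure Nash equilibrium of the subgame given by `T`. -/
def IsNashOn (u : ∀ i : Fin n, (∀ j, S j) → ℝ) (T : ∀ i, Set (S i)) (s : ∀ j, S j) : Prop :=
  InSub T s ∧ ∀ i, ∀ t ∈ T i, u i (Function.update s i t) ≤ u i s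

/-- Best-response transition within the subgame given by `T`. -/
def IsBestOn (u : ∀ i : Fin n, (∀ j, S j) → ℝ) (T : ∀ i, Set (S i)) (s s' : ∀ j, S j) : Prop :=
  InSub T s ∧ InSub T s' ∧ ∃ i, s' = Function.update s i (s' i) ∧ s' i ≠ s i ∧
    u i s < u i s' ∧ ∀ t ∈ T i, u i (Function.update s i t) ≤ u i s'

/-- Subgame stability: every subgame has a pure Nash equilibrium. -/
def SubgameStable (u : ∀ i : Fin n, (∀ j, S j) → ℝ) : Prop :=
  ∀ T : ∀ i, Set (S i), (∀ i, (T i).Nonempty) → ∃ s, IsNashOn u T s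

/-- Unique subgame stability: every subgame has exactly one pure Nash equilibrium. -/
def USS (u : ∀ i : Fin n, (∀ j, S j) → ℝ) : Prop :=
  ∀ T : ∀ i, Set (S i), (∀ i, (T i).Nonempty) → ∃! s, IsNashOn u T s

/-- Strict game: no player is indifferent between two of its own strategies
against a fixed profile of the others. -/
def StrictGame (u : ∀ i : Fin n, (∀ j, S j) → ℝ) : Prop :=
  ∀ i (s : ∀ j, S j) (t : S i), t ≠ s i → u i (Function.update s i t) ≠ u i s

/-- Reachability by best-response improvement paths. -/
def BRReach (u : ∀ i : Fin n, (∀ j, S j) → ℝ) (s t : ∀ j, S j) : Prop :=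
  Relation.ReflTransGen (IsBest u) s t

/-- The (strategy sets of the) subgame spanned by `BR_Γ(s)`. -/
def SpanBR (u : ∀ i : Fin n, (∀ j, S j) → ℝ) (s : ∀ j, S j) : ∀ i, Set (S i) :=
  fun i => {x | ∃ t, BRReach u s t ∧ t i = x}

/-- A sink of the best-response dynamics: a nonempty set of profiles closed
under best-response transitions and strongly connected. -/
def IsSinkBest (u : ∀ i : Fin n, (∀ j, S j) → ℝ) (X : Set (∀ j, S j)) : Prop :=
  X.Nonempty ∧ (∀ s ∈ X, ∀ s', IsBest u s s' → s' ∈ X) ∧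
    ∀ s ∈ X, ∀ s' ∈ X, Relation.ReflTransGen (IsBest u) s s'

end Defs

/-!
Let `a` be a profile such that equilibria are reachable from every profile differing from `a` in
at least two coordinates. Then they are reachable from everywhere: once player `i` has moved to a
best reply different from `a i`, either nobody wants to move, or another player does, and her move
leads to a profile differing from `a` in two coordinates. So equilibria are reachable from `a`, and
a profile differing from `a` only at `i` either is rescued in the same way or leads to `a`.

In a `2 × 2 × 2` game with a strict equilibrium `e`, take for `a` the antipode of `e`. A profile
differing from `a` in at least two coordinates differs from `e` in at most one, and the player of
that coordinate restores `e`.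
-/

open Function

section ReachesNash

variable {n : ℕ} {S : Fin n → Type*} {u : Fin n → (∀ j, S j) → ℝ} {s s' a : ∀ j, S j}
  {i : Fin n}

/-- Some pure Nash equilibrium is reachable from `s` by best-response moves; weak acyclicity under
best response says that this holds for every `s`. -/
def ReachesNash (u : Fin n → (∀ j, S j) → ℝ) (s : ∀ j, S j) : Prop :=
  ∃ e, Relation.ReflTransGen (IsBest u) s e ∧ IsNash u e

/-- Player `i`'s strategy in `s` is a best reply to the strategies of the others. A pure Nash
equilibrium is a profile in which this holds for every player. -/
def PlaysBestReply (u : Fin n → (∀ j, S j) → ℝ) (s : ∀ j, S j) (i : Fin n) : Prop :=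
  ∀ x : S i, u i (update s i x) ≤ u i s

theorem IsNash.reachesNash (hs : IsNash u s) : ReachesNash u s :=
  ⟨s, .refl, hs⟩

theorem IsBest.reachesNash (hmove : IsBest u s s') (hs' : ReachesNash u s') : ReachesNash u s :=
  let ⟨e, hpath, he⟩ := hs'
  ⟨e, .head hmove hpath, he⟩

theorem exists_isBest_update_of_not_playsBestReply [Finite (S i)] (hi : ¬ PlaysBestReply u s i) :
    ∃ x, x ≠ s i ∧ IsBest u s (update s i x) ∧ PlaysBestReply u (update s i x) i := by
  obtain ⟨y, hy⟩ : ∃ y, u i s < u i (update s i y) := by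
    simpa only [PlaysBestReply, not_forall, not_le] using hi
  have : Nonempty (S i) := ⟨y⟩
  obtain ⟨x, hmax⟩ := Finite.exists_max fun x => u i (update s i x)
  have hlt : u i s < u i (update s i x) := hy.trans_le (hmax y)
  have hne : x ≠ s i := by
    rintro rfl
    simp only [update_eq_self, lt_self_iff_false] at hlt
  refine ⟨x, hne, ⟨i, ?_, ?_, hlt, hmax⟩, fun z => ?_⟩
  · rw [update_self]
  · rwa [update_self]
  · rw [update_idem]
    exact hmax z

variable [∀ i, Finite (S i)]

theorem PlaysBestReply.reachesNash_of_ne (hi : PlaysBestReply u s i) (hsa : s i ≠ a i)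
    (hfar : ∀ s i j, i ≠ j → s i ≠ a i → s j ≠ a j → ReachesNash u s) : ReachesNash u s := by
  by_cases hs : IsNash u s
  · exact hs.reachesNash
  obtain ⟨j, hj⟩ : ∃ j, ¬ PlaysBestReply u s j := not_forall.mp hs
  have hij : i ≠ j := by
    rintro rfl
    exact hj hi
  by_cases hsj : s j = a j
  · obtain ⟨x, hx, hmove, -⟩ := exists_isBest_update_of_not_playsBestReply hj
    refine hmove.reachesNash (hfar _ i j hij ?_ ?_)
    · rwa [update_of_ne hij]
    · rwa [update_self, ← hsj]
  · exact hfar s i j hij hsa hsj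

theorem reachesNash_of_forall_two_ne
    (hfar : ∀ s i j, i ≠ j → s i ≠ a i → s j ≠ a j → ReachesNash u s) : ReachesNash u a := by
  by_cases ha : IsNash u a
  · exact ha.reachesNash
  obtain ⟨i, hi⟩ : ∃ i, ¬ PlaysBestReply u a i := not_forall.mp ha
  obtain ⟨x, hx, hmove, hbest⟩ := exists_isBest_update_of_not_playsBestReply hi
  exact hmove.reachesNash (hbest.reachesNash_of_ne (by rwa [update_self]) hfar)

theorem weaklyAcyclicBest_of_forall_two_ne
    (hfar : ∀ s i j, i ≠ j → s i ≠ a i → s j ≠ a j → ReachesNash u s) : WeaklyAcyclicBest u := by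
  intro s
  change ReachesNash u s
  by_cases hsa : s = a
  · exact hsa ▸ reachesNash_of_forall_two_ne hfar
  obtain ⟨i, hi⟩ : ∃ i, s i ≠ a i := ne_iff.mp hsa
  by_cases honly : ∀ j, j ≠ i → s j = a j
  · by_cases hbest : PlaysBestReply u s i
    · exact hbest.reachesNash_of_ne hi hfar
    obtain ⟨x, -, hmove, hbest'⟩ := exists_isBest_update_of_not_playsBestReply hbest
    refine hmove.reachesNash ?_
    by_cases hx : x = a i
    · have hback : update s i x = a := update_eq_iff.mpr ⟨hx, honly⟩
      exact hback ▸ reachesNash_of_forall_two_ne hfar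
    · exact hbest'.reachesNash_of_ne (by rwa [update_self]) hfar
  · obtain ⟨j, hji, hj⟩ : ∃ j, j ≠ i ∧ s j ≠ a j := by
      simpa only [not_forall, exists_prop] using honly
    exact hfar s i j hji.symm hi hj

end ReachesNash

section StrictNash

variable {n : ℕ} {S : Fin n → Type*} {u : Fin n → (∀ j, S j) → ℝ} {s e : ∀ j, S j}
  {i : Fin n}

/-- Strict pure Nash equilibrium: every unilateral deviation makes the deviating player strictly
worse off. -/
def IsStrictNash (u : Fin n → (∀ j, S j) → ℝ) (e : ∀ j, S j) : Prop :=
  ∀ i, ∀ x : S i, x ≠ e i → u i (update e i x) < u i e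

theorem IsNash.isStrictNash (he : IsNash u e) (hu : StrictGame u) : IsStrictNash u e :=
  fun i x hx => (he i x).lt_of_ne (hu i e x hx)

theorem IsStrictNash.isNash (he : IsStrictNash u e) : IsNash u e := by
  intro i x
  by_cases hx : x = e i
  · rw [hx, update_eq_self]
  · exact (he i x hx).le

theorem IsStrictNash.isBest_update (he : IsStrictNash u e) {x : S i} (hx : x ≠ e i) :
    IsBest u (update e i x) e := by
  refine ⟨i, ?_, ?_, he i x hx, fun y => ?_⟩
  · rw [update_idem, update_eq_self]
  · rw [update_self]
    exact hx.symm
  · rw [update_idem]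
    exact he.isNash i y

theorem IsStrictNash.reachesNash_of_forall_ne (he : IsStrictNash u e)
    (hs : ∀ j, j ≠ i → s j = e j) : ReachesNash u s := by
  have hs_update : s = update e i (s i) := eq_update_iff.mpr ⟨rfl, hs⟩
  rw [hs_update]
  by_cases hi : s i = e i
  · rw [hi, update_eq_self]
    exact he.isNash.reachesNash
  · exact (he.isBest_update hi).reachesNash he.isNash.reachesNash

end StrictNash

theorem exists_forall_ne_imp_eq_of_card_le_two {α : Type*} [Finite α] (hα : Nat.card α ≤ 2)
    (e : α) : ∃ a, ∀ x, x ≠ a → x = e := by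
  by_contra! h
  obtain ⟨a, -, hae⟩ := h e
  obtain ⟨x, hxa, hxe⟩ := h a
  have := Fintype.ofFinite α
  have hcard : 2 < Fintype.card α := Fintype.two_lt_card_iff.mpr ⟨x, a, e, hxa, hxe, hae⟩
  rw [Nat.card_eq_fintype_card] at hα
  exact hα.not_gt hcard

theorem stmt8_general {n : ℕ} (hn : n ≤ 3) {S : Fin n → Type*} [∀ i, Finite (S i)]
    (u : Fin n → (∀ j, S j) → ℝ) (hcard : ∀ i, Nat.card (S i) ≤ 2)
    (hstrict : ∃ e, IsStrictNash u e) : WeaklyAcyclicBest u := by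
  obtain ⟨e, he⟩ := hstrict
  choose a ha using fun i => exists_forall_ne_imp_eq_of_card_le_two (hcard i) (e i)
  refine weaklyAcyclicBest_of_forall_two_ne (a := a) fun s i j hij hi hj => ?_
  have hsi : s i = e i := ha i _ hi
  have hsj : s j = e j := ha j _ hj
  by_cases hse : s = e
  · exact hse ▸ he.isNash.reachesNash
  obtain ⟨k, hk⟩ : ∃ k, s k ≠ e k := ne_iff.mp hse
  refine he.reachesNash_of_forall_ne (i := k) fun l hlk => ?_
  have hki : k ≠ i := fun h => hk (h ▸ hsi)
  have hkj : k ≠ j := fun h => hk (h ▸ hsj)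
  obtain rfl | rfl : l = i ∨ l = j := by omega
  exacts [hsi, hsj]

theorem stmt8 {S : Fin 3 → Type*} [∀ i, Fintype (S i)] [∀ i, Nonempty (S i)]
    (u : ∀ i : Fin 3, (∀ j, S j) → ℝ) (hcard : ∀ i, Fintype.card (S i) = 2)
    (hstrict : StrictGame u) (hne : ∃ s, IsNash u s) : WeaklyAcyclicBest u :=
  let ⟨e, he⟩ := hne
  stmt8_general le_rfl u (fun i => (Nat.card_eq_fintype_card.trans (hcard i)).le)
    ⟨e, he.isStrictNash hstrict⟩
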